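/- arXiv:2106.02068 — 2 statements merged into one kernel-verified Lean document; each statement's English description precedes it below -/
import Mathlib

section
/- Let u, α, δ be real numbers with α > 0, 0 < u < 1 and |δ| ≤ u. Then α(1−u) < α·√(1+δ) < α(1+u). Consequently |α·√(1+δ) − α| < u·α, while |α·√(1+δ) − α(1−2u)| > u·α and |α·√(1+δ) − α(1+2u)| > u·α; that is, among the three points α(1−2u), α, α(1+2u), the point α is the strictly nearest one to α·√(1+δ). -/
theorem abs_sqrt_sub_one_eq_div {x : ℝ} (hx : 0 ≤ x) : |√x - 1| = |x - 1| / (√x + 1) := by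
  have hpos : 0 < √x + 1 := by positivity
  have hfactor : x - 1 = (√x - 1) * (√x + 1) := by linear_combination -Real.sq_sqrt hx
  rw [hfactor, abs_mul, abs_of_pos hpos, mul_div_cancel_right₀ _ hpos.ne']

theorem abs_sqrt_sub_one_lt_of_abs_sub_one_le {x u : ℝ} (hx : 0 < x) (hu : 0 < u)
    (hxu : |x - 1| ≤ u) : |√x - 1| < u := by
  have hsqrt : 0 < √x := Real.sqrt_pos.mpr hx
  calc |√x - 1| = |x - 1| / (√x + 1) := abs_sqrt_sub_one_eq_div hx.le
    _ ≤ u / (√x + 1) := by gcongr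
    _ < u := div_lt_self hu (lt_add_of_pos_left 1 hsqrt)

theorem lt_abs_sub_of_abs_sub_lt_of_add_self_le {G : Type*} [AddCommGroup G] [LinearOrder G]
    [IsOrderedAddMonoid G] {x a b r : G} (hxa : |x - a| < r) (hab : r + r ≤ |a - b|) :
    r < |x - b| := by
  have htriangle : |a - b| ≤ |x - a| + |x - b| := abs_sub_comm a x ▸ abs_sub_le a x b
  exact lt_of_add_lt_add_left <|
    calc |x - a| + r < r + r := by gcongr
      _ ≤ |a - b| := hab
      _ ≤ |x - a| + |x - b| := htriangle

/-- Let `u, α, δ` be real numbers with `α > 0`, `0 < u < 1` and `|δ| ≤ u`.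
Then `α(1−u) < α·√(1+δ) < α(1+u)`. Consequently `|α·√(1+δ) − α| < u·α`, while
`|α·√(1+δ) − α(1−2u)| > u·α` and `|α·√(1+δ) − α(1+2u)| > u·α`; that is, among the three
points `α(1−2u), α, α(1+2u)`, the point `α` is the strictly nearest one to `α·√(1+δ)`. -/
theorem stmt_0 (u α δ : ℝ) (hα : 0 < α) (hu0 : 0 < u) (hu1 : u < 1) (hδ : |δ| ≤ u) :
    α * (1 - u) < α * Real.sqrt (1 + δ) ∧
    α * Real.sqrt (1 + δ) < α * (1 + u) ∧
    |α * Real.sqrt (1 + δ) - α| < u * α ∧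
    |α * Real.sqrt (1 + δ) - α * (1 - 2 * u)| > u * α ∧
    |α * Real.sqrt (1 + δ) - α * (1 + 2 * u)| > u * α := by
  have hpos : 0 < 1 + δ := by linarith [neg_le_of_abs_le hδ]
  have hsqrt : |√(1 + δ) - 1| < u :=
    abs_sqrt_sub_one_lt_of_abs_sub_one_le hpos hu0 (by rwa [add_sub_cancel_left])
  have hnear : |α * √(1 + δ) - α| < u * α := by
    calc |α * √(1 + δ) - α| = |√(1 + δ) - 1| * α := by
          rw [← mul_sub_one, abs_mul, abs_of_pos hα, mul_comm]
      _ < u * α := by gcongr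
  have hgap_left : u * α + u * α ≤ |α - α * (1 - 2 * u)| :=
    le_abs.mpr (Or.inl (by linarith))
  have hgap_right : u * α + u * α ≤ |α - α * (1 + 2 * u)| :=
    le_abs.mpr (Or.inr (by linarith))
  obtain ⟨hlower, hupper⟩ := abs_lt.mp hnear
  exact ⟨by linarith, by linarith, hnear,
    lt_abs_sub_of_abs_sub_lt_of_add_self_le hnear hgap_left,
    lt_abs_sub_of_abs_sub_lt_of_add_self_le hnear hgap_right⟩
end

section
/- Let n = m·p and let P be an n×n signed block permutation matrix with p×p blocks (a block permutation matrix whose nonzero p×p blocks are signed permutation matrices). Let T be an n×n block tridiagonal matrix with p×p blocks, with symmetric diagonal blocks M̃₁,…,M̃_m and with subdiagonal blocks B̃₂,…,B̃_m that are upper triangular with positive diagonal entries (and superdiagonal blocks B̃_{i+1}ᵀ). Put A = P T Pᵀ and U₁ = P E₁, where E_i ∈ ℝ^{n×p} denotes the i-th block column of the n×n identity matrix. Then the exact block Lanczos algorithm applied to (A, U₁), in which each QR factorization R_{i+1} = U_{i+1} B_{i+1} is chosen with U_{i+1} having orthonormal columns and B_{i+1} upper triangular with positive diagonal entries, produces U_i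 = P E_i, M_i = M̃_i, and B_i = B̃_i for all i = 1, …, m; in particular the block tridiagonal matrix T_m generated by the algorithm equals T. -/
open Matrix

/-- A signed permutation matrix: exactly one nonzero entry in each row and column,
each nonzero entry being `+1` or `−1`. -/
def IsSignedPerm {p : ℕ} (Q : Matrix (Fin p) (Fin p) ℝ) : Prop :=
  ∃ (π : Equiv.Perm (Fin p)) (ε : Fin p → ℝ), (∀ j, ε j = 1 ∨ ε j = -1) ∧
    ∀ i j, Q i j = if i = π j then ε j else 0

/-- A signed block permutation matrix with `p×p` blocks (indexed by `Fin m × Fin p`):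
a block permutation matrix whose nonzero `p×p` blocks are signed permutation matrices. -/
def IsSignedBlockPerm {m p : ℕ} (P : Matrix (Fin m × Fin p) (Fin m × Fin p) ℝ) : Prop :=
  ∃ (σ : Equiv.Perm (Fin m)) (Q : Fin m → Matrix (Fin p) (Fin p) ℝ),
    (∀ j, IsSignedPerm (Q j)) ∧
    ∀ (i j : Fin m) (a b : Fin p), P (i, a) (j, b) = if i = σ j then Q j a b else 0

/-- The `i`-th block column `Eᵢ ∈ ℝ^{n×p}` of the `n×n` identity matrix (`n = m·p`). -/
def blockE (m p : ℕ) (i : Fin m) : Matrix (Fin m × Fin p) (Fin p) ℝ :=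
  Matrix.of fun r c => if r = (i, c) then 1 else 0

/-!
The QR factorization with positive diagonal is unique: two such factorizations `U B = V C` differ by
`W = C B⁻¹`, which is upper triangular and orthogonal, hence diagonal with `W a a = ±1`, and the
signs of `B` and `C` force `W = 1`.

Let `Pₖ` be the block columns of a matrix `P` with orthonormal columns and `A P = P T`. Reading
`A P = P T` one block column at a time gives
`A Pₖ - Pₖ T_{k,k} - P_{k-1} T_{k,k-1}ᵀ = P_{k+1} T_{k+1,k}`, whose right-hand side is a QR
factorization with positive diagonal. So once `U₁ = P₁`, uniqueness forces every later Lanczos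
block to be the corresponding block column of `P`. A signed block permutation is one such `P`.
-/

section BlockColumns

variable {R ι ι' ν ν' κ κ' : Type*}

/-- The `j`-th block column of a matrix whose columns are indexed by (block, position in block). -/
def blockCol (X : Matrix ι (ν × κ) R) (j : ν) : Matrix ι κ R :=
  X.submatrix id (Prod.mk j)

/-- The `(i, j)` block of a matrix whose rows and columns are indexed by
(block, position in block). -/
def block (X : Matrix (ν × κ) (ν' × κ') R) (i : ν) (j : ν') : Matrix κ κ' R :=
  X.submatrix (Prod.mk i) (Prod.mk j)

theorem block_transpose (X : Matrix (ν × κ) (ν' × κ') R) (i : ν) (j : ν') :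
    (block X i j)ᵀ = block Xᵀ j i :=
  rfl

theorem block_one_self [DecidableEq ν] [DecidableEq κ] [Zero R] [One R] (i : ν) :
    block (1 : Matrix (ν × κ) (ν × κ) R) i i = 1 :=
  submatrix_one _ (Prod.mk_right_injective i)

theorem mul_blockCol [Fintype ι'] [Mul R] [AddCommMonoid R] (X : Matrix ι ι' R)
    (Y : Matrix ι' (ν × κ) R) (j : ν) : X * blockCol Y j = blockCol (X * Y) j :=
  rfl

theorem transpose_blockCol_mul_blockCol [Fintype ι] [Mul R] [AddCommMonoid R]
    (X : Matrix ι (ν × κ) R) (Y : Matrix ι (ν' × κ') R) (i : ν) (j : ν') :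
    (blockCol X i)ᵀ * blockCol Y j = block (Xᵀ * Y) i j :=
  rfl

theorem transpose_blockCol_mul_mul_blockCol [Fintype ι] [Fintype ν] [Fintype κ] [DecidableEq ν]
    [DecidableEq κ] [Semiring R] {A : Matrix ι ι R} {P : Matrix ι (ν × κ) R}
    {T : Matrix (ν × κ) (ν × κ) R} (hP : Pᵀ * P = 1) (hAP : A * P = P * T) (i j : ν) :
    (blockCol P i)ᵀ * A * blockCol P j = block T i j := by
  rw [Matrix.mul_assoc, mul_blockCol, transpose_blockCol_mul_blockCol, hAP, ← Matrix.mul_assoc, hP,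
    Matrix.one_mul]

theorem blockCol_mul_eq_sum [Fintype ν] [Fintype κ] [NonUnitalNonAssocSemiring R]
    (X : Matrix ι (ν × κ) R) (Y : Matrix (ν × κ) (ν' × κ') R) (j : ν') {s : Finset ν}
    (hs : ∀ i ∉ s, block Y i j = 0) :
    blockCol (X * Y) j = ∑ i ∈ s, blockCol X i * block Y i j := by
  rw [Finset.sum_subset s.subset_univ fun i _ hi => by rw [hs i hi, Matrix.mul_zero]]
  ext r b
  simp [blockCol, block, Matrix.mul_apply, Matrix.sum_apply, Fintype.sum_prod_type]

end BlockColumns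

theorem mul_blockE {ι : Type*} {m p : ℕ} (X : Matrix ι (Fin m × Fin p) ℝ) (i : Fin m) :
    X * blockE m p i = blockCol X i := by
  ext r b
  simp [blockCol, blockE, Matrix.mul_apply]

theorem IsSignedPerm.transpose_mul_self {p : ℕ} {Q : Matrix (Fin p) (Fin p) ℝ}
    (hQ : IsSignedPerm Q) : Qᵀ * Q = 1 := by
  obtain ⟨π, ε, hε, hQ⟩ := hQ
  have hεε : ∀ a, ε a * ε a = 1 := fun a => mul_self_eq_one_iff.2 (hε a)
  ext a b
  obtain rfl | hab := eq_or_ne a b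
  · simp [Matrix.mul_apply, hQ, hεε]
  · simp [Matrix.mul_apply, hQ, hab, hab.symm]

theorem IsSignedBlockPerm.transpose_mul_self {m p : ℕ}
    {P : Matrix (Fin m × Fin p) (Fin m × Fin p) ℝ} (hP : IsSignedBlockPerm P) : Pᵀ * P = 1 := by
  obtain ⟨σ, Q, hQ, hP⟩ := hP
  ext ⟨i, a⟩ ⟨j, b⟩
  obtain rfl | hij := eq_or_ne i j
  · have hQab := congr_fun₂ (hQ i).transpose_mul_self a b
    simpa [Matrix.mul_apply, Fintype.sum_prod_type, hP, Matrix.one_apply] using hQab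
  · simp [Matrix.mul_apply, Fintype.sum_prod_type, hP, hij, hij.symm]

section QR

variable {𝕜 ι κ : Type*} [Fintype κ] [LinearOrder κ]

theorem mul_apply_self_of_isUpperTriangular [NonUnitalNonAssocSemiring 𝕜] {X Y : Matrix κ κ 𝕜}
    (hX : X.IsUpperTriangular) (hY : Y.IsUpperTriangular) (a : κ) :
    (X * Y) a a = X a a * Y a a := by
  rw [Matrix.mul_apply]
  refine Finset.sum_eq_single_of_mem a (Finset.mem_univ a) fun c _ hca => ?_
  rcases hca.lt_or_gt with hlt | hgt
  · rw [hX hlt, zero_mul]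
  · rw [hY hgt, mul_zero]

theorem isDiag_of_isUpperTriangular_of_transpose_mul_self [CommRing 𝕜] {W : Matrix κ κ 𝕜}
    (hW : W.IsUpperTriangular) (horth : Wᵀ * W = 1) : W.IsDiag := by
  have : Invertible W := invertibleOfLeftInverse W Wᵀ horth
  have hWt : Wᵀ.IsUpperTriangular :=
    inv_eq_left_inv horth ▸ blockTriangular_inv_of_blockTriangular hW
  intro a b hab
  rcases hab.lt_or_gt with hlt | hgt
  · exact hWt hlt
  · exact hW hgt

/-- `R = U * B` is a QR factorization normalized so that `B` has positive diagonal. -/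
structure IsPosQR [Fintype ι] [Field 𝕜] [LinearOrder 𝕜] (R U : Matrix ι κ 𝕜)
    (B : Matrix κ κ 𝕜) : Prop where
  eq_mul : R = U * B
  transpose_mul_self : Uᵀ * U = 1
  isUpperTriangular : B.IsUpperTriangular
  diag_pos : ∀ a, 0 < B a a

variable [Field 𝕜] [LinearOrder 𝕜] [IsStrictOrderedRing 𝕜]

theorem isUnit_det_of_isUpperTriangular_of_pos {B : Matrix κ κ 𝕜} (hB : B.IsUpperTriangular)
    (hpos : ∀ a, 0 < B a a) : IsUnit B.det := by
  rw [det_of_isUpperTriangular hB]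
  exact (Finset.prod_pos fun a _ => hpos a).ne'.isUnit

theorem eq_one_of_isUpperTriangular_of_transpose_mul_self {W : Matrix κ κ 𝕜}
    (hW : W.IsUpperTriangular) (horth : Wᵀ * W = 1) (hpos : ∀ a, 0 < W a a) : W = 1 := by
  have hdiag := isDiag_of_isUpperTriangular_of_transpose_mul_self hW horth
  have hsq : ∀ a, W a a * W a a = 1 := fun a => by
    have hWt : Wᵀ.IsUpperTriangular := fun a b hab => hdiag.transpose hab.ne'
    simpa using (mul_apply_self_of_isUpperTriangular hWt hW a).symm.trans (congr_fun₂ horth a a)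
  have hone : W.diag = 1 := funext fun a =>
    (mul_self_eq_one_iff.1 (hsq a)).resolve_right fun hneg => by linarith [hpos a]
  rw [← hdiag.diagonal_diag, hone, Pi.one_def, diagonal_one]

theorem IsPosQR.unique [Fintype ι] {R U V : Matrix ι κ 𝕜} {B C : Matrix κ κ 𝕜} (hUB : IsPosQR R U B)
    (hVC : IsPosQR R V C) : U = V ∧ B = C := by
  have hdet := isUnit_det_of_isUpperTriangular_of_pos hUB.isUpperTriangular hUB.diag_pos
  have : Invertible B := invertibleOfIsUnitDet B hdet
  obtain ⟨W, hWdef⟩ : ∃ W, W = C * B⁻¹ := ⟨_, rfl⟩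
  have hWB : W * B = C := by rw [hWdef, nonsing_inv_mul_cancel_right _ _ hdet]
  have hUVW : U = V * W := by
    rw [hWdef, ← Matrix.mul_assoc, ← hVC.eq_mul, hUB.eq_mul, mul_nonsing_inv_cancel_right _ _ hdet]
  have hWtri : W.IsUpperTriangular := hWdef ▸
    hVC.isUpperTriangular.mul (blockTriangular_inv_of_blockTriangular hUB.isUpperTriangular)
  have hWorth : Wᵀ * W = 1 := calc
    Wᵀ * W = Wᵀ * (Vᵀ * V) * W := by rw [hVC.transpose_mul_self, Matrix.mul_one]
    _ = Uᵀ * U := by simp only [hUVW, transpose_mul, Matrix.mul_assoc]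
    _ = 1 := hUB.transpose_mul_self
  have hWpos : ∀ a, 0 < W a a := fun a => by
    have hWBpos : 0 < W a a * B a a := by
      rw [← mul_apply_self_of_isUpperTriangular hWtri hUB.isUpperTriangular, hWB]
      exact hVC.diag_pos a
    exact pos_of_mul_pos_left hWBpos (hUB.diag_pos a).le
  have hW : W = 1 := eq_one_of_isUpperTriangular_of_transpose_mul_self hWtri hWorth hWpos
  rw [hW, Matrix.mul_one] at hUVW
  rw [hW, Matrix.one_mul] at hWB
  exact ⟨hUVW, hWB⟩

end QR

section BlockLanczos

variable {𝕜 ι κ : Type*} [Field 𝕜] [LinearOrder 𝕜] [Fintype κ] [LinearOrder κ] {m : ℕ}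
  {T : Matrix (Fin m × κ) (Fin m × κ) 𝕜} {A : Matrix ι ι 𝕜} {P : Matrix ι (Fin m × κ) 𝕜}
  {U : ℕ → Matrix ι κ 𝕜} {B M : ℕ → Matrix κ κ 𝕜}

/-- A block Jacobi matrix: symmetric and block tridiagonal, with subdiagonal blocks that are upper
triangular with positive diagonal. -/
structure IsBlockJacobi (T : Matrix (Fin m × κ) (Fin m × κ) 𝕜) : Prop where
  isSymm : T.IsSymm
  block_eq_zero : ∀ i j : Fin m, (i : ℕ) + 1 < j ∨ (j : ℕ) + 1 < i → block T i j = 0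
  isUpperTriangular_subdiag : ∀ i j : Fin m, (i : ℕ) = j + 1 → (block T i j).IsUpperTriangular
  subdiag_pos : ∀ i j : Fin m, (i : ℕ) = j + 1 → ∀ a, 0 < block T i j a a

namespace IsBlockJacobi

theorem blockCol_mul_first (hT : IsBlockJacobi T) (P : Matrix ι (Fin m × κ) 𝕜) {i j : Fin m}
    (hi : (i : ℕ) = 0) (hij : (j : ℕ) = i + 1) :
    blockCol (P * T) i = blockCol P i * block T i i + blockCol P j * block T j i := by
  have hsupp : ∀ l ∉ ({i, j} : Finset (Fin m)), block T l i = 0 := fun l hl => by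
    simp only [Finset.mem_insert, Finset.mem_singleton, Fin.ext_iff] at hl
    exact hT.block_eq_zero l i (by lia)
  rw [blockCol_mul_eq_sum P T i hsupp, Finset.sum_pair (by lia)]

theorem blockCol_mul_interior (hT : IsBlockJacobi T) (P : Matrix ι (Fin m × κ) 𝕜) {i j k : Fin m}
    (hij : (j : ℕ) = i + 1) (hjk : (k : ℕ) = j + 1) :
    blockCol (P * T) j = blockCol P i * (block T j i)ᵀ + blockCol P j * block T j j +
      blockCol P k * block T k j := by
  have hsupp : ∀ l ∉ ({i, j, k} : Finset (Fin m)), block T l j = 0 := fun l hl => by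
    simp only [Finset.mem_insert, Finset.mem_singleton, Fin.ext_iff] at hl
    exact hT.block_eq_zero l j (by lia)
  have hi : i ∉ ({j, k} : Finset (Fin m)) := by
    simp only [Finset.mem_insert, Finset.mem_singleton, Fin.ext_iff]
    lia
  rw [blockCol_mul_eq_sum P T j hsupp, Finset.sum_insert hi, Finset.sum_pair (by lia),
    block_transpose, hT.isSymm.eq, add_assoc]

theorem isPosQR_subdiag [Fintype ι] (hT : IsBlockJacobi T) (hP : Pᵀ * P = 1) {i j : Fin m}
    (hij : (j : ℕ) = i + 1) :
    IsPosQR (blockCol P j * block T j i) (blockCol P j) (block T j i) where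
  eq_mul := rfl
  transpose_mul_self := by rw [transpose_blockCol_mul_blockCol, hP, block_one_self]
  isUpperTriangular := hT.isUpperTriangular_subdiag j i hij
  diag_pos := hT.subdiag_pos j i hij

end IsBlockJacobi

/-- `U`, `B`, `M` are the output of `m` steps of the block Lanczos algorithm for `A`, indexed from
`1` as in the algorithm. Step `i` is written with `i = k + 1`, which turns `U (i - 1)` into `U k`;
`U 0` enters only through the product `U 0 * (B 1)ᵀ = 0`. -/
structure IsBlockLanczos [Fintype ι] (A : Matrix ι ι 𝕜) (m : ℕ) (U : ℕ → Matrix ι κ 𝕜)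
    (B M : ℕ → Matrix κ κ 𝕜) : Prop where
  B_one : B 1 = 0
  M_eq : ∀ k < m, M (k + 1) = (U (k + 1))ᵀ * A * U (k + 1)
  qr : ∀ k, k + 1 < m →
    IsPosQR (A * U (k + 1) - U (k + 1) * M (k + 1) - U k * (B (k + 1))ᵀ) (U (k + 2)) (B (k + 2))

namespace IsBlockLanczos

variable [Fintype ι]

theorem M_eq_block (hL : IsBlockLanczos A m U B M) (hP : Pᵀ * P = 1) (hAP : A * P = P * T)
    {i : Fin m} (hU : U (i + 1) = blockCol P i) : M (i + 1) = block T i i := by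
  rw [hL.M_eq i i.isLt, hU, transpose_blockCol_mul_mul_blockCol hP hAP]

variable [IsStrictOrderedRing 𝕜]

theorem next_eq_of_recurrence (hL : IsBlockLanczos A m U B M) (hT : IsBlockJacobi T)
    (hP : Pᵀ * P = 1) (hAP : A * P = P * T) {i j : Fin m} (hij : (j : ℕ) = i + 1)
    (hU : U (i + 1) = blockCol P i)
    (hrec : blockCol (P * T) i =
      U i * (B (i + 1))ᵀ + blockCol P i * block T i i + blockCol P j * block T j i) :
    U (i + 2) = blockCol P j ∧ B (i + 2) = block T j i := by
  refine (hL.qr i (hij ▸ j.isLt)).unique ?_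
  convert hT.isPosQR_subdiag hP hij using 1
  rw [hL.M_eq_block hP hAP hU, hU, mul_blockCol, hAP, hrec]
  abel

theorem eq_blockCol_and_eq_subdiag (hL : IsBlockLanczos A m U B M) (hT : IsBlockJacobi T)
    (hP : Pᵀ * P = 1) (hAP : A * P = P * T) (hm : 0 < m) (hU : U 1 = blockCol P ⟨0, hm⟩) (k : ℕ)
    (hk : k + 1 < m) :
    U (k + 1) = blockCol P ⟨k, by lia⟩ ∧ U (k + 2) = blockCol P ⟨k + 1, hk⟩ ∧
      B (k + 2) = block T ⟨k + 1, hk⟩ ⟨k, by lia⟩ := by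
  induction k with
  | zero =>
    refine ⟨hU, hL.next_eq_of_recurrence hT hP hAP (i := ⟨0, hm⟩) (j := ⟨1, hk⟩) rfl hU ?_⟩
    rw [hL.B_one, transpose_zero, Matrix.mul_zero, zero_add]
    exact hT.blockCol_mul_first P rfl rfl
  | succ k ih =>
    obtain ⟨hUk, hUk', hBk⟩ := ih (by lia)
    refine ⟨hUk', hL.next_eq_of_recurrence hT hP hAP (i := ⟨k + 1, by lia⟩) (j := ⟨k + 2, hk⟩) rfl
      hUk' ?_⟩
    rw [hUk, hBk]
    exact hT.blockCol_mul_interior P rfl rfl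

theorem U_eq_blockCol (hL : IsBlockLanczos A m U B M) (hT : IsBlockJacobi T)
    (hP : Pᵀ * P = 1) (hAP : A * P = P * T) (hm : 0 < m) (hU : U 1 = blockCol P ⟨0, hm⟩) :
    ∀ i : Fin m, U (i + 1) = blockCol P i
  | ⟨0, _⟩ => hU
  | ⟨k + 1, hk⟩ => (hL.eq_blockCol_and_eq_subdiag hT hP hAP hm hU k hk).2.1

end IsBlockLanczos

theorem stmt_9_general [Fintype ι] [IsStrictOrderedRing 𝕜] (hL : IsBlockLanczos A m U B M)
    (hT : IsBlockJacobi T) (hP : Pᵀ * P = 1) (hAP : A * P = P * T) (hm : 0 < m)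
    (hU : U 1 = blockCol P ⟨0, hm⟩) :
    (∀ i : Fin m, U (i + 1) = blockCol P i) ∧
    (∀ i : Fin m, M (i + 1) = block T i i) ∧
    (∀ (i : Fin m) (h : (i : ℕ) + 1 < m), B (i + 2) = block T ⟨i + 1, h⟩ i) :=
  have hUcol := hL.U_eq_blockCol hT hP hAP hm hU
  ⟨hUcol, fun i => hL.M_eq_block hP hAP (hUcol i),
    fun i h => (hL.eq_blockCol_and_eq_subdiag hT hP hAP hm hU i h).2.2⟩

end BlockLanczos

/-- Let `n = m·p` and let `P` be an `n×n` signed block permutation matrix with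
`p×p` blocks.  Let `T` be an `n×n` block tridiagonal matrix with symmetric diagonal blocks
`M̃₁,…,M̃ₘ` and subdiagonal blocks `B̃₂,…,B̃ₘ` that are upper triangular with positive diagonal
entries (and superdiagonal blocks `B̃ᵢ₊₁ᵀ`).  Put `A = P T Pᵀ` and `U₁ = P E₁`.  Then the exact
block Lanczos algorithm applied to `(A, U₁)` — i.e. any sequences `U`, `M`, `B` satisfying
`U₀ = U₁`, `B₁ = 0`, `Mᵢ = Uᵢᵀ A Uᵢ`, and `Uᵢ₊₁ Bᵢ₊₁ = A Uᵢ − Uᵢ Mᵢ − Uᵢ₋₁ Bᵢᵀ` where each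
`Uᵢ₊₁` has orthonormal columns and each `Bᵢ₊₁` is upper triangular with positive diagonal —
produces `Uᵢ = P Eᵢ`, `Mᵢ = M̃ᵢ`, and `Bᵢ = B̃ᵢ` for all `i = 1,…,m`; in particular the block
tridiagonal matrix `Tₘ` generated by the algorithm equals `T`.
(Here the index set `Fin m × Fin p` encodes `Fin (m·p)` blockwise: `M̃ᵢ = (T ((i,·),(i,·)))`
and `B̃ᵢ₊₁ = (T ((i+1,·),(i,·)))`.) -/
theorem stmt_9 {m p : ℕ} (hm : 0 < m)
    (P T : Matrix (Fin m × Fin p) (Fin m × Fin p) ℝ)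
    (hP : IsSignedBlockPerm P)
    (hTsym : Tᵀ = T)
    (hTtri : ∀ (i j : Fin m) (a b : Fin p),
      ((i : ℕ) + 1 < (j : ℕ) ∨ (j : ℕ) + 1 < (i : ℕ)) → T (i, a) (j, b) = 0)
    (hTsubTri : ∀ (i j : Fin m) (a b : Fin p),
      (i : ℕ) = (j : ℕ) + 1 → (b : ℕ) < (a : ℕ) → T (i, a) (j, b) = 0)
    (hTsubPos : ∀ (i j : Fin m) (a : Fin p), (i : ℕ) = (j : ℕ) + 1 → 0 < T (i, a) (j, a))
    (A : Matrix (Fin m × Fin p) (Fin m × Fin p) ℝ) (hA : A = P * T * Pᵀ)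
    (U : ℕ → Matrix (Fin m × Fin p) (Fin p) ℝ)
    (B M : ℕ → Matrix (Fin p) (Fin p) ℝ)
    (hU1 : U 1 = P * blockE m p ⟨0, hm⟩)
    (hU0 : U 0 = U 1)
    (hB1 : B 1 = 0)
    (hM : ∀ i, 1 ≤ i → i ≤ m → M i = (U i)ᵀ * A * U i)
    (hQR : ∀ i, 1 ≤ i → i + 1 ≤ m →
      U (i + 1) * B (i + 1) = A * U i - U i * M i - U (i - 1) * (B i)ᵀ)
    (hUorth : ∀ i, 2 ≤ i → i ≤ m → (U i)ᵀ * U i = 1)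
    (hBtri : ∀ i, 2 ≤ i → i ≤ m → ∀ a b : Fin p, (b : ℕ) < (a : ℕ) → B i a b = 0)
    (hBpos : ∀ i, 2 ≤ i → i ≤ m → ∀ a : Fin p, 0 < B i a a) :
    (∀ i : Fin m, U ((i : ℕ) + 1) = P * blockE m p i) ∧
    (∀ (i : Fin m) (a b : Fin p), M ((i : ℕ) + 1) a b = T (i, a) (i, b)) ∧
    (∀ (i : Fin m) (h : (i : ℕ) + 1 < m) (a b : Fin p),
      B ((i : ℕ) + 2) a b = T (⟨(i : ℕ) + 1, h⟩, a) (i, b)) := by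
  have hPP := hP.transpose_mul_self
  have hAP : A * P = P * T := by rw [hA, Matrix.mul_assoc, hPP, Matrix.mul_one]
  have hT : IsBlockJacobi T :=
    { isSymm := hTsym
      block_eq_zero := fun i j hij => Matrix.ext fun a b => hTtri i j a b hij
      isUpperTriangular_subdiag := fun i j hij a b hab => hTsubTri i j a b hij hab
      subdiag_pos := fun i j hij a => hTsubPos i j a hij }
  have hL : IsBlockLanczos A m U B M :=
    { B_one := hB1
      M_eq := fun k hk => hM (k + 1) (by lia) hk
      qr := fun k hk =>
        { eq_mul := (hQR (k + 1) (by lia) hk).symm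
          transpose_mul_self := hUorth (k + 2) (by lia) hk
          isUpperTriangular := fun a b hab => hBtri (k + 2) (by lia) hk a b hab
          diag_pos := hBpos (k + 2) (by lia) hk } }
  simp only [mul_blockE] at hU1 ⊢
  obtain ⟨hUcol, hMdiag, hBsub⟩ := stmt_9_general hL hT hPP hAP hm hU1
  exact ⟨hUcol, fun i => congr_fun₂ (hMdiag i), fun i h => congr_fun₂ (hBsub i h)⟩
end
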